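/- Let L be the extension of DataLTL by the additional formation rule φ ::= ρ U_@ (@ ∧ τ), where ρ and τ range over position formulas (formulas containing none of the class operators X⁼, Y⁼, U⁼, S⁼ and no U_@), with semantics: w, i ⊨ ρ U_@ (@ ∧ τ) iff there exists j ≥ i with d j = d i, w, j ⊨ τ, and w, k ⊨ ρ for all k with i ≤ k < j. Then satisfiability of L-formulas over finite 1-attributed words is undecidable: there is no computable function f from L-formulas to Bool such that f(φ) = true if and only if φ is satisfiable over finite 1-attributed words. -/

import Mathlib

/-!
STATEMENT 0: Satisfiability of the extension `L` of DataLTL by the rule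
φ ::= ρ U_@ (@ ∧ τ) (with ρ, τ position formulas) is undecidable over
finite 1-attributed words.
-/

namespace Stmt0

/-- Position formulas: no class operators and no `U_@`.
Atomic propositions are identified with natural numbers. -/
inductive PosFormula : Type where
  | atom : ℕ → PosFormula
  | neg  : PosFormula → PosFormula
  | or   : PosFormula → PosFormula → PosFormula
  | X    : PosFormula → PosFormula
  | Y    : PosFormula → PosFormula
  | U    : PosFormula → PosFormula → PosFormula
  | S    : PosFormula → PosFormula → PosFormula

/-- Formulas of the logic `L`: full DataLTL, plus the additional rule
`uat ρ τ` representing ρ U_@ (@ ∧ τ) where ρ, τ are position formulas. -/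
inductive LFormula : Type where
  | atom : ℕ → LFormula
  | neg  : LFormula → LFormula
  | or   : LFormula → LFormula → LFormula
  | X    : LFormula → LFormula
  | Y    : LFormula → LFormula
  | U    : LFormula → LFormula → LFormula
  | S    : LFormula → LFormula → LFormula
  | Xeq  : LFormula → LFormula
  | Yeq  : LFormula → LFormula
  | Ueq  : LFormula → LFormula → LFormula
  | Seq  : LFormula → LFormula → LFormula
  | uat  : PosFormula → PosFormula → LFormula

/-- A finite 1-attributed word: length `n ≥ 1`, a labeling with sets of
atomic propositions, and a data value at each position. -/
structure Word : Type where
  n : ℕ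
  npos : 0 < n
  lab : Fin n → Set ℕ
  d : Fin n → ℕ

/-- Satisfaction for position formulas on finite 1-attributed words. -/
def satP (w : Word) : Fin w.n → PosFormula → Prop
  | i, .atom p => p ∈ w.lab i
  | i, .neg φ => ¬ satP w i φ
  | i, .or φ ψ => satP w i φ ∨ satP w i ψ
  | i, .X φ => ∃ h : (i : ℕ) + 1 < w.n, satP w ⟨(i : ℕ) + 1, h⟩ φ
  | i, .Y φ => 0 < (i : ℕ) ∧
      satP w ⟨(i : ℕ) - 1, Nat.lt_of_le_of_lt (Nat.sub_le _ _) i.isLt⟩ φ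
  | i, .U φ ψ => ∃ j : Fin w.n, i ≤ j ∧ satP w j ψ ∧
      ∀ k : Fin w.n, i ≤ k → k < j → satP w k φ
  | i, .S φ ψ => ∃ j : Fin w.n, j ≤ i ∧ satP w j ψ ∧
      ∀ k : Fin w.n, j < k → k ≤ i → satP w k φ

/-- Satisfaction for `L`-formulas on finite 1-attributed words. -/
def satL (w : Word) : Fin w.n → LFormula → Prop
  | i, .atom p => p ∈ w.lab i
  | i, .neg φ => ¬ satL w i φ
  | i, .or φ ψ => satL w i φ ∨ satL w i ψ
  | i, .X φ => ∃ h : (i : ℕ) + 1 < w.n, satL w ⟨(i : ℕ) + 1, h⟩ φ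
  | i, .Y φ => 0 < (i : ℕ) ∧
      satL w ⟨(i : ℕ) - 1, Nat.lt_of_le_of_lt (Nat.sub_le _ _) i.isLt⟩ φ
  | i, .U φ ψ => ∃ j : Fin w.n, i ≤ j ∧ satL w j ψ ∧
      ∀ k : Fin w.n, i ≤ k → k < j → satL w k φ
  | i, .S φ ψ => ∃ j : Fin w.n, j ≤ i ∧ satL w j ψ ∧
      ∀ k : Fin w.n, j < k → k ≤ i → satL w k φ
  | i, .Xeq φ => ∃ j : Fin w.n, i < j ∧ w.d j = w.d i ∧
      (∀ k : Fin w.n, i < k → w.d k = w.d i → j ≤ k) ∧ satL w j φ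
  | i, .Yeq φ => ∃ j : Fin w.n, j < i ∧ w.d j = w.d i ∧
      (∀ k : Fin w.n, k < i → w.d k = w.d i → k ≤ j) ∧ satL w j φ
  | i, .Ueq φ ψ => ∃ j : Fin w.n, i ≤ j ∧ w.d j = w.d i ∧ satL w j ψ ∧
      ∀ k : Fin w.n, i ≤ k → k < j → w.d k = w.d i → satL w k φ
  | i, .Seq φ ψ => ∃ j : Fin w.n, j ≤ i ∧ w.d j = w.d i ∧ satL w j ψ ∧
      ∀ k : Fin w.n, j < k → k ≤ i → w.d k = w.d i → satL w k φ
  | i, .uat ρ τ => ∃ j : Fin w.n, i ≤ j ∧ w.d j = w.d i ∧ satP w j τ ∧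
      ∀ k : Fin w.n, i ≤ k → k < j → satP w k ρ

/-- Satisfiability over finite 1-attributed words. -/
def Satisfiable (φ : LFormula) : Prop :=
  ∃ w : Word, satL w ⟨0, w.npos⟩ φ

/-- An (injective) Gödel encoding of position formulas. -/
def encodeP : PosFormula → ℕ
  | .atom p => Nat.pair 0 p
  | .neg φ => Nat.pair 1 (encodeP φ)
  | .or φ ψ => Nat.pair 2 (Nat.pair (encodeP φ) (encodeP ψ))
  | .X φ => Nat.pair 3 (encodeP φ)
  | .Y φ => Nat.pair 4 (encodeP φ)
  | .U φ ψ => Nat.pair 5 (Nat.pair (encodeP φ) (encodeP ψ))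
  | .S φ ψ => Nat.pair 6 (Nat.pair (encodeP φ) (encodeP ψ))

/-- An (injective) Gödel encoding of `L`-formulas. -/
def encodeL : LFormula → ℕ
  | .atom p => Nat.pair 0 p
  | .neg φ => Nat.pair 1 (encodeL φ)
  | .or φ ψ => Nat.pair 2 (Nat.pair (encodeL φ) (encodeL ψ))
  | .X φ => Nat.pair 3 (encodeL φ)
  | .Y φ => Nat.pair 4 (encodeL φ)
  | .U φ ψ => Nat.pair 5 (Nat.pair (encodeL φ) (encodeL ψ))
  | .S φ ψ => Nat.pair 6 (Nat.pair (encodeL φ) (encodeL ψ))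
  | .Xeq φ => Nat.pair 7 (encodeL φ)
  | .Yeq φ => Nat.pair 8 (encodeL φ)
  | .Ueq φ ψ => Nat.pair 9 (Nat.pair (encodeL φ) (encodeL ψ))
  | .Seq φ ψ => Nat.pair 10 (Nat.pair (encodeL φ) (encodeL ψ))
  | .uat ρ τ => Nat.pair 11 (Nat.pair (encodeP ρ) (encodeP τ))


/-! ### Part 1: a small counter language computing primitive recursive functions -/

inductive Prog : Type where
  | skip : Prog
  | inc : ℕ → Prog
  | seq : Prog → Prog → Prog
  | loop : ℕ → Prog → Prog

abbrev St := ℕ → ℕ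

inductive Exec : Prog → St → St → Prop where
  | skip (s) : Exec .skip s s
  | inc (r) (s : St) : Exec (.inc r) s (Function.update s r (s r + 1))
  | seq {P Q s s' s''} : Exec P s s' → Exec Q s' s'' → Exec (.seq P Q) s s''
  | loopZ {r P s} : s r = 0 → Exec (.loop r P) s s
  | loopS {r P s s' s''} : 0 < s r → Exec P (Function.update s r (s r - 1)) s' →
      Exec (.loop r P) s' s'' → Exec (.loop r P) s s''

theorem Exec.cast {P s s' t'} (h : Exec P s s') (e : s' = t') : Exec P s t' := e ▸ h

theorem exec_inc {r : ℕ} {s s' : St} (e : s' = Function.update s r (s r + 1)) :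
    Exec (.inc r) s s' := e ▸ Exec.inc r s

theorem exec_loop {r P} (m : ℕ) (I : ℕ → St) (hI : ∀ k ≤ m, I k r = k)
    (hs : ∀ k < m, Exec P (Function.update (I (k+1)) r k) (I k)) :
    Exec (.loop r P) (I m) (I 0) := by
  induction m with
  | zero => exact Exec.loopZ (hI 0 le_rfl)
  | succ m ih =>
    have h1 := hI (m+1) le_rfl
    refine Exec.loopS (s' := I m) (by omega) ?_
      (ih (fun k hk => hI k (by omega)) (fun k hk => hs k (by omega)))
    rw [h1]
    exact hs m (by omega)

def clearP (r : ℕ) : Prog := .loop r .skip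

theorem exec_clear (r : ℕ) (s : St) : Exec (clearP r) s (Function.update s r 0) := by
  have := exec_loop (r := r) (P := .skip) (s r) (fun k => Function.update s r k)
    (by simp) (by intro k hk; simpa using Exec.skip _)
  simpa [clearP] using this

def moveP (a c : ℕ) : Prog := .loop a (.inc c)

theorem exec_move {a c : ℕ} (h : a ≠ c) (s : St) :
    Exec (moveP a c) s (Function.update (Function.update s a 0) c (s c + s a)) := by
  have := exec_loop (r := a) (P := .inc c) (s a)
    (fun k => Function.update (Function.update s a k) c (s c + (s a - k)))
    (by intro k hk; simp [h])
    (by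
      intro k hk
      apply exec_inc
      funext x
      simp only [Function.update_apply]
      grind)
  simpa [moveP] using this

def copyP (a c t : ℕ) : Prog := .seq (.loop a (.seq (.inc c) (.inc t))) (moveP t a)

theorem exec_copy {a c t : ℕ} (h : a ≠ c) (h1 : a ≠ t) (h2 : c ≠ t) (s : St) (ht : s t = 0) :
    Exec (copyP a c t) s (Function.update s c (s c + s a)) := by
  have := exec_loop (r := a) (P := .seq (.inc c) (.inc t)) (s a)
    (fun k => Function.update (Function.update (Function.update s a k) c (s c + (s a - k)))
      t (s a - k))
    (by intro k hk; simp [h, h1])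
    (by
      intro k hk
      refine Exec.seq (Exec.inc _ _) ?_
      apply exec_inc
      funext x
      simp only [Function.update_apply]
      grind)
  refine Exec.seq (s' := Function.update (Function.update (Function.update s a 0) c (s c + (s a)))
      t (s a)) ?_ ?_
  · convert this using 1
    · funext x
      simp only [Function.update_apply]
      grind
    · simp
  · refine (exec_move h1.symm _).cast ?_
    funext x
    simp only [Function.update_apply]
    grind

theorem map_congr' {n} (v : List.Vector ℕ n) {s s' : St} (h : ∀ r ∈ v.toList, s r = s' r) :
    v.map s = v.map s' := by
  apply List.Vector.eq
  simpa [List.Vector.toList_map] using h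

def Impl {n} (f : List.Vector ℕ n → ℕ) : Prop :=
  ∀ (args : List.Vector ℕ n) (out b : ℕ), (∀ r ∈ args.toList, r < b) → out < b →
    out ∉ args.toList → ∃ P, ∀ s : St, (∀ r, b ≤ r → s r = 0) → s out = 0 →
      Exec P s (Function.update s out (f (args.map s)))

theorem exec_clears (b j : ℕ) :
    ∃ P, ∀ s : St, Exec P s (fun r => if b ≤ r ∧ r < b + j then 0 else s r) := by
  induction j with
  | zero =>
    refine ⟨.skip, fun s => (Exec.skip s).cast ?_⟩
    funext r
    grind
  | succ j ih =>
    obtain ⟨P, hP⟩ := ih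
    refine ⟨.seq P (clearP (b+j)), fun s => Exec.seq (hP s) ((exec_clear _ _).cast ?_)⟩
    funext r
    simp only [Function.update_apply]
    grind

theorem impl_comp {m n} {f : List.Vector ℕ n → ℕ} (g : Fin n → List.Vector ℕ m → ℕ)
    (hf : Impl f) (hg : ∀ i, Impl (g i)) :
    Impl (fun a => f (List.Vector.ofFn fun i => g i a)) := by
  intro args out b hargs hout hnot
  let val : List.Vector ℕ m → ℕ → ℕ := fun v i => if h : i < n then g ⟨i, h⟩ v else 0
  have key : ∀ j ≤ n, ∃ P, ∀ s : St, (∀ r, b ≤ r → s r = 0) →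
      Exec P s (fun r => if b ≤ r ∧ r < b + j then val (args.map s) (r - b) else s r) := by
    intro j
    induction j with
    | zero =>
      intro _
      refine ⟨.skip, fun s _ => (Exec.skip s).cast ?_⟩
      funext r
      grind
    | succ j ih =>
      intro hj
      obtain ⟨P, hP⟩ := ih (by omega)
      obtain ⟨Q, hQ⟩ := hg ⟨j, by omega⟩ args (b+j) (b+n)
        (fun r hr => by have := hargs r hr; omega) (by omega)
        (fun hr => by have := hargs _ hr; omega)
      refine ⟨.seq P Q, fun s hs => Exec.seq (hP s hs) ?_⟩
      refine (hQ _ ?_ ?_).cast ?_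
      · intro r hr
        have := hs r (by omega)
        grind
      · have := hs (b+j) (by omega)
        grind
      · have e : (args.map fun r => if b ≤ r ∧ r < b + j then val (args.map s) (r - b) else s r)
            = args.map s := by
          apply map_congr'
          intro r hr
          have := hargs r hr
          grind
        rw [e]
        funext r
        simp only [Function.update_apply]
        have : val (args.map s) j = g ⟨j, by omega⟩ (args.map s) := by
          simp only [val]; rw [dif_pos]
        by_cases hr : r = b + j
        · subst hr
          simp [this]
        · grind
  obtain ⟨P, hP⟩ := key n le_rfl
  obtain ⟨Q, hQ⟩ := hf (List.Vector.ofFn fun i : Fin n => b + i) out (b+n)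
    (by
      intro r hr
      rw [List.Vector.toList_ofFn, List.mem_ofFn] at hr
      obtain ⟨i, rfl⟩ := hr
      omega) (by omega)
    (by
      intro hr
      rw [List.Vector.toList_ofFn, List.mem_ofFn] at hr
      obtain ⟨i, hi⟩ := hr
      omega)
  obtain ⟨C, hC⟩ := exec_clears b n
  refine ⟨.seq P (.seq Q C), fun s hs ho => Exec.seq (hP s hs) (Exec.seq (hQ _ ?_ ?_)
    ((hC _).cast ?_))⟩
  · intro r hr
    have := hs r (by omega)
    grind
  · grind
  · have e : ((List.Vector.ofFn fun i : Fin n => b + i).map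
        fun r => if b ≤ r ∧ r < b + n then val (args.map s) (r - b) else s r)
        = List.Vector.ofFn fun i => g i (args.map s) := by
      apply List.Vector.ext
      intro i
      have hi := i.isLt
      simp [val]
    rw [e]
    funext r
    simp only [Function.update_apply]
    have := hs r
    grind

theorem impl_prec {n} {f : List.Vector ℕ n → ℕ} {g : List.Vector ℕ (n+2) → ℕ}
    (hf : Impl f) (hg : Impl g) :
    Impl (fun v : List.Vector ℕ (n+1) => v.head.rec (f v.tail)
      fun y IH => g (y ::ᵥ IH ::ᵥ v.tail)) := by
  intro args out b hargs hout hnot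
  obtain ⟨h, tl, rfl⟩ := args.exists_eq_cons
  simp only [List.Vector.toList_cons, List.mem_cons, forall_eq_or_imp, not_or] at hargs hnot
  obtain ⟨hh, htl⟩ := hargs
  obtain ⟨hoh, hot⟩ := hnot
  obtain ⟨P, hP⟩ := hf tl out (b+3) (fun r hr => by have := htl r hr; omega) (by omega) hot
  obtain ⟨Q, hQ⟩ := hg (b ::ᵥ out ::ᵥ tl) (b+2) (b+3)
    (by
      simp only [List.Vector.toList_cons, List.mem_cons, forall_eq_or_imp]
      exact ⟨by omega, by omega, fun r hr => by have := htl r hr; omega⟩) (by omega)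
    (by
      simp only [List.Vector.toList_cons, List.mem_cons, not_or]
      exact ⟨by omega, by omega, fun hr => by have := htl _ hr; omega⟩)
  refine ⟨.seq (copyP h (b+1) (b+2)) (.seq P (.seq (.loop (b+1)
    (.seq Q (.seq (clearP out) (.seq (moveP (b+2) out) (.inc b))))) (clearP b))), ?_⟩
  intro s hs ho
  have z0 := hs b (by omega)
  have z1 := hs (b+1) (by omega)
  have z2 := hs (b+2) (by omega)
  simp only [List.Vector.map_cons, List.Vector.head_cons, List.Vector.tail_cons]
  set R : ℕ → ℕ := fun k => Nat.rec (motive := fun _ => ℕ) (f (tl.map s))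
    (fun y IH => g (y ::ᵥ IH ::ᵥ tl.map s)) k with hR
  have R0 : R 0 = f (tl.map s) := rfl
  have RS : ∀ k, R (k+1) = g (k ::ᵥ R k ::ᵥ tl.map s) := fun k => rfl
  change Exec _ s (Function.update s out (R (s h)))
  let I : ℕ → St := fun k => Function.update (Function.update (Function.update s (b+1) k) b
    (s h - k)) out (R (s h - k))
  refine Exec.seq (exec_copy (by omega) (by omega) (by omega) s z2) ?_
  refine Exec.seq (s' := I (s h)) ((hP _ ?_ ?_).cast ?_) ?_
  · intro r hr
    have := hs r (by omega)
    simp only [Function.update_apply]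
    grind
  · simp only [Function.update_apply]
    grind
  · have e : tl.map (Function.update s (b+1) (s (b+1) + s h)) = tl.map s := by
      apply map_congr'
      intro r hr
      have := htl r hr
      simp only [Function.update_apply]
      grind
    rw [e, ← R0]
    funext r
    simp only [Function.update_apply, I]
    grind
  refine Exec.seq (s' := I 0) (exec_loop (s h) I ?_ ?_) ((exec_clear _ _).cast ?_)
  · intro k hk
    simp only [Function.update_apply, I]
    grind
  · intro k hk
    refine Exec.seq (hQ _ ?_ ?_) (Exec.seq (exec_clear _ _) (Exec.seq
      (exec_move (by omega) _) (exec_inc ?_)))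
    · intro r hr
      have := hs r (by omega)
      simp only [Function.update_apply, I]
      grind
    · simp only [Function.update_apply, I]
      grind
    · have e : ((b ::ᵥ out ::ᵥ tl).map (Function.update (I (k+1)) (b+1) k))
          = (s h - (k+1)) ::ᵥ R (s h - (k+1)) ::ᵥ tl.map s := by
        have e1 : tl.map (Function.update (I (k+1)) (b+1) k) = tl.map s := by
          apply map_congr'
          intro r hr
          have := htl r hr
          have : r ≠ out := fun h => hot (h ▸ hr)
          simp only [Function.update_apply, I]
          grind
        have e2 : Function.update (I (k+1)) (b+1) k b = s h - (k+1) := by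
          simp only [Function.update_apply, I]
          grind
        have e3 : Function.update (I (k+1)) (b+1) k out = R (s h - (k+1)) := by
          simp only [Function.update_apply, I]
          grind
        rw [List.Vector.map_cons, List.Vector.map_cons, e1, e2, e3]
      rw [e, ← RS]
      have e4 : s h - (k+1) + 1 = s h - k := by omega
      rw [e4]
      clear_value R
      funext r
      simp only [Function.update_apply, I]
      grind
  · clear_value R
    funext r
    simp only [Function.update_apply, I]
    grind

theorem impl_get {n} (i : Fin n) : Impl (fun v : List.Vector ℕ n => v.get i) := by
  intro args out b hargs hout hnot
  have hm : args.get i ∈ args.toList := List.Vector.get_mem i args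
  have := hargs _ hm
  have h2 : args.get i ≠ out := fun h => hnot (h ▸ hm)
  refine ⟨copyP (args.get i) out b, fun s hs ho =>
    (exec_copy h2 (by omega) (by omega) s (hs b le_rfl)).cast ?_⟩
  simp [ho]

theorem impl_succ : Impl (fun v : List.Vector ℕ 1 => v.head.succ) := by
  intro args out b hargs hout hnot
  obtain ⟨P, hP⟩ := impl_get (0 : Fin 1) args out b hargs hout hnot
  refine ⟨.seq P (.inc out), fun s hs ho => Exec.seq (hP s hs ho) (exec_inc ?_)⟩
  simp [List.Vector.get_zero]

theorem impl_of_primrec' {n} {f : List.Vector ℕ n → ℕ} (hf : Nat.Primrec' f) : Impl f := by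
  induction hf with
  | zero =>
    intro args out b _ _ _
    refine ⟨.skip, fun s hs ho => (Exec.skip s).cast ?_⟩
    funext r
    simp only [Function.update_apply]
    grind
  | succ => exact impl_succ
  | get i => exact impl_get i
  | comp g _ _ ih1 ih2 => exact impl_comp g ih1 ih2
  | prec _ _ ih1 ih2 => exact impl_prec ih1 ih2

def initSt (n k : ℕ) : St := Function.update (Function.update (fun _ => 0) 0 n) 1 k

open Nat.Partrec in
theorem exists_prog : ∃ P : Prog, ∃ g : ℕ → ℕ → ℕ,
    (∀ n k, ∃ s', Exec P (initSt n k) s' ∧ s' 2 = g n k) ∧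
    ∀ c : Code, (c.eval 0).Dom ↔ ∃ k, g (Encodable.encode c) k = 0 := by
  let G : List.Vector ℕ 2 → ℕ := fun v =>
    if (Code.evaln (v.get 1) (Denumerable.ofNat Code (v.get 0)) 0).isSome = true then 0 else 1
  have hG : Primrec G := by
    have g0 : Primrec fun v : List.Vector ℕ 2 => v.get 0 :=
      Primrec.vector_get.comp Primrec.id (Primrec.const 0)
    have g1 : Primrec fun v : List.Vector ℕ 2 => v.get 1 :=
      Primrec.vector_get.comp Primrec.id (Primrec.const 1)
    have h1 : Primrec fun v : List.Vector ℕ 2 =>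
        Code.evaln (v.get 1) (Denumerable.ofNat Code (v.get 0)) 0 :=
      Code.primrec_evaln.comp (Primrec.pair (Primrec.pair g1 ((Primrec.ofNat Code).comp g0))
        (Primrec.const 0))
    have h2 := Primrec.option_isSome.comp h1
    exact Primrec.ite (Primrec.eq.comp h2 (Primrec.const true)) (Primrec.const 0)
      (Primrec.const 1)
  obtain ⟨P, hP⟩ := impl_of_primrec' (Nat.Primrec'.of_prim hG) (0 ::ᵥ 1 ::ᵥ List.Vector.nil) 2 3
    (by simp) (by simp) (by simp)
  refine ⟨P, fun n k => G (n ::ᵥ k ::ᵥ List.Vector.nil), fun n k => ⟨_, hP _ ?_ ?_, ?_⟩, ?_⟩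
  · intro r hr
    simp only [initSt, Function.update_apply]
    grind
  · simp [initSt]
  · simp [initSt]
  · intro c
    rw [Part.dom_iff_mem]
    constructor
    · rintro ⟨y, hy⟩
      obtain ⟨k, hk⟩ := Code.evaln_complete.1 hy
      refine ⟨k, ?_⟩
      simp only [G]
      rw [if_pos]
      change (Code.evaln k (Denumerable.ofNat Code (Encodable.encode c)) 0).isSome = true
      rw [Denumerable.ofNat_encode, Option.isSome_iff_exists]
      exact ⟨y, hk⟩
    · rintro ⟨k, hk⟩
      have : (Code.evaln k (Denumerable.ofNat Code (Encodable.encode c)) 0).isSome = true := by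
        by_contra hcon
        change (if (Code.evaln k (Denumerable.ofNat Code (Encodable.encode c)) 0).isSome = true
          then 0 else 1) = 0 at hk
        rw [if_neg hcon] at hk
        omega
      rw [Denumerable.ofNat_encode, Option.isSome_iff_exists] at this
      obtain ⟨y, hy⟩ := this
      exact ⟨y, Code.evaln_complete.2 ⟨k, hy⟩⟩

/-! ### Part 2: flat counter machines -/

structure Tr where
  src : ℕ
  kind : ℕ
  reg : ℕ
  dst : ℕ
deriving DecidableEq

/-- Effect of a transition on the counters: kind 0 is increment, 1 is decrement,
2 is zero test, everything else is a no-op. -/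
def Eff (t : Tr) (s s' : St) : Prop :=
  if t.kind = 0 then s' = Function.update s t.reg (s t.reg + 1)
  else if t.kind = 1 then 0 < s t.reg ∧ s' = Function.update s t.reg (s t.reg - 1)
  else if t.kind = 2 then s t.reg = 0 ∧ s' = s
  else s' = s

abbrev Cf := ℕ × St

def StepBy (t : Tr) (c c' : Cf) : Prop := t.src = c.1 ∧ t.dst = c'.1 ∧ Eff t c.2 c'.2

def Step (T : List Tr) (c c' : Cf) : Prop := ∃ t ∈ T, StepBy t c c'

def Prog.size : Prog → ℕ
  | .skip => 0
  | .inc _ => 1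
  | .seq P Q => P.size + Q.size
  | .loop _ P => P.size + 2

def Prog.compile : Prog → ℕ → List Tr
  | .skip, _ => []
  | .inc r, q => [⟨q, 0, r, q+1⟩]
  | .seq P Q, q => P.compile q ++ Q.compile (q + P.size)
  | .loop r P, q => ⟨q, 1, r, q+1⟩ :: ⟨q, 2, r, q + P.size + 2⟩ ::
      ⟨q + 1 + P.size, 3, 0, q⟩ :: P.compile (q+1)

theorem compile_bounds (P : Prog) : ∀ q, ∀ t ∈ P.compile q,
    q ≤ t.src ∧ t.src < q + P.size ∧ q ≤ t.dst ∧ t.dst ≤ q + P.size := by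
  induction P with
  | skip => intro q t ht; simp [Prog.compile] at ht
  | inc r => intro q t ht; simp [Prog.compile] at ht; subst ht; simp [Prog.size]
  | seq P Q ih1 ih2 =>
    intro q t ht
    simp only [Prog.compile, List.mem_append] at ht
    simp only [Prog.size]
    rcases ht with ht | ht
    · have := ih1 _ _ ht; omega
    · have := ih2 _ _ ht; omega
  | loop r P ih =>
    intro q t ht
    simp only [Prog.compile, List.mem_cons] at ht
    simp only [Prog.size]
    rcases ht with rfl | rfl | rfl | ht
    · simp
    · simp; omega
    · simp; omega
    · have := ih _ _ ht; omega

def Compat (t u : Tr) : Prop :=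
  t = u ∨ (t.kind = 1 ∧ u.kind = 2 ∧ t.reg = u.reg) ∨ (t.kind = 2 ∧ u.kind = 1 ∧ t.reg = u.reg)

theorem compile_det (P : Prog) : ∀ q, ∀ t ∈ P.compile q, ∀ u ∈ P.compile q, t.src = u.src →
    Compat t u := by
  induction P with
  | skip => intro q t ht; simp [Prog.compile] at ht
  | inc r => 
    intro q t ht u hu _
    simp only [Prog.compile, List.mem_singleton] at ht hu
    exact Or.inl (ht.trans hu.symm)
  | seq P Q ih1 ih2 =>
    intro q t ht u hu h
    simp only [Prog.compile, List.mem_append] at ht hu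
    rcases ht with ht | ht <;> rcases hu with hu | hu
    · exact ih1 _ _ ht _ hu h
    · have := compile_bounds _ _ _ ht; have := compile_bounds _ _ _ hu; omega
    · have := compile_bounds _ _ _ ht; have := compile_bounds _ _ _ hu; omega
    · exact ih2 _ _ ht _ hu h
  | loop r P ih =>
    intro q t ht u hu h
    simp only [Prog.compile, List.mem_cons] at ht hu
    have hb := compile_bounds P (q+1)
    rcases ht with rfl | rfl | rfl | ht <;> rcases hu with rfl | rfl | rfl | hu <;>
      first
      | exact ih _ _ ‹_› _ ‹_› h
      | (have := hb _ ‹_›; simp at h; omega)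
      | (simp [Compat] at h ⊢; try omega)

theorem eff_det {t u : Tr} (h : Compat t u) {s s1 s2 : St} (h1 : Eff t s s1) (h2 : Eff u s s2) :
    t = u ∧ s1 = s2 := by
  unfold Eff at h1 h2
  rcases h with rfl | ⟨a, b, c⟩ | ⟨a, b, c⟩
  · grind
  · simp [a] at h1; simp [b] at h2; rw [c] at h1; omega
  · simp [a] at h1; simp [b] at h2; rw [c] at h1; omega

theorem Step.mono {T T' : List Tr} (h : T ⊆ T') {c c'} : Step T c c' → Step T' c c' :=
  fun ⟨t, ht, hs⟩ => ⟨t, h ht, hs⟩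

open Relation in
theorem path_mono {T T' : List Tr} {c c'} (h : ReflTransGen (Step T) c c') (hT : T ⊆ T') :
    ReflTransGen (Step T') c c' :=
  ReflTransGen.mono (fun _ _ hh => Step.mono hT hh) _ _ h

open Relation in
theorem exec_path {P s s'} (h : Exec P s s') : ∀ q,
    ReflTransGen (Step (P.compile q)) (q, s) (q + P.size, s') := by
  induction h with
  | skip s => intro q; exact .refl
  | inc r s =>
    intro q
    exact .single ⟨_, List.mem_singleton.2 rfl, rfl, rfl, by simp [Eff]⟩
  | @seq P Q s s' s'' _ _ ih1 ih2 =>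
    intro q
    have h1 := path_mono (T' := (P.seq Q).compile q) (ih1 q) (by simp [Prog.compile])
    have h2 := path_mono (T' := (P.seq Q).compile q) (ih2 (q + P.size)) (by simp [Prog.compile])
    have := h1.trans h2
    simpa [Prog.size, add_assoc] using this
  | @loopZ r P s h =>
    intro q
    exact .single ⟨⟨q, 2, r, q + P.size + 2⟩, by simp [Prog.compile], rfl, rfl, by simp [Eff, h]⟩
  | @loopS r P s s' s'' h _ _ ih1 ih2 =>
    intro q
    have h1 := path_mono (T' := (Prog.loop r P).compile q) (ih1 (q+1))
      (by simp only [Prog.compile]; intro x hx; simp [hx])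
    refine ReflTransGen.trans (.head ?_ (h1.trans (.single ?_))) (ih2 q)
    · exact ⟨⟨q, 1, r, q+1⟩, by simp [Prog.compile], rfl, rfl, by simp [Eff, h]⟩
    · exact ⟨⟨q + 1 + P.size, 3, 0, q⟩, by simp [Prog.compile], rfl, rfl, by simp [Eff]⟩

/-- A run of the machine given by functions. -/
def Run (T : List Tr) (F : ℕ) (c : Cf) (N : ℕ) (a : ℕ → Tr) (cfg : ℕ → Cf) : Prop :=
  cfg 0 = c ∧ (cfg N).1 = F ∧ ∀ p < N, a p ∈ T ∧ StepBy (a p) (cfg p) (cfg (p+1))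

theorem Run.cons {T F c N a cfg} (h : Run T F c N a cfg) {c' t} (ht : t ∈ T)
    (hs : StepBy t c' c) :
    Run T F c' (N+1) (fun i => Nat.casesOn i t a) (fun i => Nat.casesOn i c' cfg) := by
  obtain ⟨h1, h2, h3⟩ := h
  refine ⟨rfl, h2, ?_⟩
  intro p hp
  cases p with
  | zero => exact ⟨ht, by simpa [h1] using hs⟩
  | succ p => exact h3 p (by omega)

open Relation in
theorem run_of_path {T F c s} (h : ReflTransGen (Step T) c (F, s)) :
    ∃ N a cfg, Run T F c N a cfg := by
  induction h using ReflTransGen.head_induction_on with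
  | refl => exact ⟨0, fun _ => ⟨0,0,0,0⟩, fun _ => (F, s), rfl, rfl, by simp⟩
  | head h _ ih =>
    obtain ⟨t, ht, hs⟩ := h
    obtain ⟨N, a, cfg, hr⟩ := ih
    exact ⟨_, _, _, hr.cons ht hs⟩

def tInit : Tr := ⟨0, 0, 0, 0⟩

def mainT (P : Prog) : List Tr := P.compile 2 ++ [⟨2 + P.size, 2, 2, 3 + P.size⟩]

def fullT (P : Prog) : List Tr :=
  tInit :: ⟨0, 3, 0, 1⟩ :: ⟨1, 0, 1, 1⟩ :: ⟨1, 3, 0, 2⟩ :: mainT P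

theorem mainT_sub (P : Prog) : mainT P ⊆ fullT P := by
  intro x hx; simp [fullT, hx]

theorem mainT_bounds (P : Prog) : ∀ t ∈ mainT P, 2 ≤ t.src ∧ t.src < 3 + P.size ∧ 2 ≤ t.dst := by
  intro t ht
  simp only [mainT, List.mem_append, List.mem_singleton] at ht
  rcases ht with ht | rfl
  · have := compile_bounds _ _ _ ht; omega
  · simp; omega

theorem mainT_det (P : Prog) : Relator.RightUnique (Step (mainT P)) := by
  rintro c c1 c2 ⟨t, ht, h1, h2, h3⟩ ⟨u, hu, k1, k2, k3⟩
  have hc : Compat t u := by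
    simp only [mainT, List.mem_append, List.mem_singleton] at ht hu
    rcases ht with ht | rfl <;> rcases hu with hu | rfl
    · exact compile_det _ _ _ ht _ hu (h1.trans k1.symm)
    · have := compile_bounds _ _ _ ht; simp at k1; omega
    · have := compile_bounds _ _ _ hu; simp at h1; omega
    · exact Or.inl rfl
  obtain ⟨rfl, e⟩ := eff_det hc h3 k3
  exact Prod.ext (h2.symm.trans k2) e

open Relation in
theorem main_path {P s s'} (h : Exec P s s') :
    (∃ z, ReflTransGen (Step (mainT P)) (2, s) (3 + P.size, z)) ↔ s' 2 = 0 := by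
  have h1 : ReflTransGen (Step (mainT P)) (2, s) (2 + P.size, s') :=
    path_mono (exec_path h 2) (by simp [mainT])
  constructor
  · rintro ⟨z, hz⟩
    have key : ReflTransGen (Step (mainT P)) (2 + P.size, s') (3 + P.size, z) := by
      rcases ReflTransGen.total_of_right_unique (mainT_det P) h1 hz with h | h
      · exact h
      · rcases ReflTransGen.cases_head h with h | ⟨c, ⟨t, ht, hs, _⟩, _⟩
        · rw [h]
        · have := mainT_bounds _ _ ht; simp at hs; omega
    rcases ReflTransGen.cases_head key with h | ⟨c, ⟨t, ht, hs, _, he⟩, _⟩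
    · simp at h
    · simp only [mainT, List.mem_append, List.mem_singleton] at ht
      rcases ht with ht | rfl
      · have := compile_bounds _ _ _ ht; simp at hs; omega
      · simp [Eff] at he; exact he.1
  · intro h2
    refine ⟨s', h1.tail ⟨⟨2 + P.size, 2, 2, 3 + P.size⟩, by simp [mainT], rfl, rfl, ?_⟩⟩
    simp [Eff, h2]

theorem eff_init (n : ℕ) : Eff tInit (initSt n 0) (initSt (n+1) 0) := by
  simp only [Eff, tInit, if_true]
  funext r
  simp only [initSt, Function.update_apply]
  grind

theorem eff_init1 (n k : ℕ) : Eff ⟨1, 0, 1, 1⟩ (initSt n k) (initSt n (k+1)) := by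
  simp only [Eff, if_true]
  funext r
  simp only [initSt, Function.update_apply]
  grind

theorem eff0_det {t : Tr} {s s1 s2 : St} (h1 : Eff t s s1) (h2 : Eff t s s2) : s1 = s2 :=
  (eff_det (Or.inl rfl) h1 h2).2

open Relation in
theorem full_run (P : Prog) (n : ℕ) :
    (∃ k z, ReflTransGen (Step (mainT P)) (2, initSt n k) (3 + P.size, z)) ↔
    ∃ N a cfg, Run (fullT P) (3 + P.size) (0, fun _ => 0) N a cfg ∧
      (∀ i < n, a i = tInit) ∧ n < N ∧ a n ≠ tInit := by
  have i00 : initSt 0 0 = fun _ => 0 := by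
    funext r; simp [initSt]
  constructor
  · rintro ⟨k, z, h⟩
    have h1 : ReflTransGen (Step (fullT P)) (2, initSt n k) (3 + P.size, z) :=
      path_mono h (mainT_sub P)
    have h2 : ∀ j ≤ k, ReflTransGen (Step (fullT P)) (1, initSt n (k - j)) (3 + P.size, z) := by
      intro j
      induction j with
      | zero => 
        intro _
        refine .head ⟨⟨1, 3, 0, 2⟩, by simp [fullT], rfl, rfl, by simp [Eff]⟩ h1
      | succ j ih =>
        intro hj
        refine .head ⟨⟨1, 0, 1, 1⟩, by simp [fullT], rfl, rfl, ?_⟩ (ih (by omega))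
        have := eff_init1 n (k - (j+1))
        rwa [show k - (j+1) + 1 = k - j by omega] at this
    have h3 := h2 k le_rfl
    rw [Nat.sub_self] at h3
    obtain ⟨N, a, cfg, hr⟩ := run_of_path h3
    have key : ∀ m ≤ n, ∃ N a cfg, Run (fullT P) (3 + P.size) (0, initSt (n - m) 0) N a cfg ∧
      (∀ i < m, a i = tInit) ∧ m < N ∧ a m ≠ tInit := by
      intro m
      induction m with
      | zero =>
        intro _
        refine ⟨_, _, _, hr.cons (t := ⟨0, 3, 0, 1⟩) (by simp [fullT]) ⟨rfl, rfl, by simp [Eff]⟩,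
          by simp, by omega, by simp [tInit]⟩
      | succ m ih =>
        intro hm
        obtain ⟨N, a, cfg, hr, h1, h2, h3⟩ := ih (by omega)
        refine ⟨_, _, _, hr.cons (t := tInit) (c' := (0, initSt (n - (m+1)) 0)) (by simp [fullT])
          ⟨rfl, rfl, ?_⟩, ?_, by omega, h3⟩
        · have := eff_init (n - (m+1))
          rwa [show n - (m+1) + 1 = n - m by omega] at this
        · intro i hi
          cases i with
          | zero => rfl
          | succ i => exact h1 i (by omega)
    have := key n le_rfl
    rwa [Nat.sub_self, i00] at this
  · rintro ⟨N, a, cfg, ⟨c0, cN, hs⟩, h1, h2, h3⟩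
    have inv : ∀ p ≤ N, (cfg p = (0, initSt p 0) ∧ p ≤ n) ∨ (∃ k, cfg p = (1, initSt n k)) ∨
        (2 ≤ (cfg p).1 ∧ ∃ k, ReflTransGen (Step (mainT P)) (2, initSt n k) (cfg p)) := by
      intro p
      induction p with
      | zero => intro _; left; rw [c0, i00]; simp
      | succ p ih =>
        intro hp
        obtain ⟨ht, hst⟩ := hs p (by omega)
        have hst' := hst
        obtain ⟨e1, e2, e3⟩ := hst
        simp only [fullT, List.mem_cons] at ht
        rcases ih (by omega) with ⟨hc, hpn⟩ | ⟨k, hc⟩ | ⟨hc, k, hk⟩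
        · rcases ht with ht | ht | ht | ht | ht
          · left
            have : p ≠ n := by rintro rfl; exact h3 ht
            refine ⟨?_, by omega⟩
            rw [ht, hc] at e3
            rw [ht] at e2
            exact Prod.ext e2.symm (eff0_det e3 (eff_init p))
          · right; left
            have : p = n := by
              by_contra hne
              have := h1 p (by omega)
              rw [ht] at this
              simp [tInit] at this
            subst this
            rw [ht, hc] at e3
            rw [ht] at e2
            refine ⟨0, Prod.ext e2.symm ?_⟩
            simpa [Eff] using e3
          · rw [hc, ht] at e1; simp at e1
          · rw [hc, ht] at e1; simp at e1
          · have := mainT_bounds _ _ ht; rw [hc] at e1; simp at e1; omega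
        · rcases ht with ht | ht | ht | ht | ht
          · rw [hc, ht] at e1; simp [tInit] at e1
          · rw [hc, ht] at e1; simp at e1
          · right; left
            rw [ht, hc] at e3
            rw [ht] at e2
            exact ⟨k+1, Prod.ext e2.symm (eff0_det e3 (eff_init1 n k))⟩
          · right; right
            rw [ht, hc] at e3
            rw [ht] at e2
            have : cfg (p+1) = (2, initSt n k) := Prod.ext e2.symm (by simpa [Eff] using e3)
            rw [this]
            exact ⟨le_rfl, k, .refl⟩
          · have := mainT_bounds _ _ ht; rw [hc] at e1; simp at e1; omega
        · right; right
          rcases ht with ht | ht | ht | ht | ht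
          · rw [ht] at e1; simp [tInit] at e1; omega
          · rw [ht] at e1; simp at e1; omega
          · rw [ht] at e1; simp at e1; omega
          · rw [ht] at e1; simp at e1; omega
          · have := mainT_bounds _ _ ht
            exact ⟨by omega, k, hk.tail ⟨_, ht, hst'⟩⟩
    rcases inv N le_rfl with ⟨h, _⟩ | ⟨k, h⟩ | ⟨_, k, h⟩
    · rw [h] at cN; simp at cN; omega
    · rw [h] at cN; simp at cN; omega
    · refine ⟨k, (cfg N).2, ?_⟩
      rwa [show (3 + P.size, (cfg N).2) = cfg N from Prod.ext cN.symm rfl]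

open Nat.Partrec in
theorem exists_machine : ∃ (T : List Tr) (F : ℕ) (t0 : Tr), t0 ∈ T ∧ ∀ c : Code, (c.eval 0).Dom ↔
    ∃ N a cfg, Run T F (0, fun _ => 0) N a cfg ∧
      (∀ i < Encodable.encode c, a i = t0) ∧ Encodable.encode c < N ∧
      a (Encodable.encode c) ≠ t0 := by
  obtain ⟨P, g, hP, hg⟩ := exists_prog
  refine ⟨fullT P, 3 + P.size, tInit, by simp [fullT], fun c => ?_⟩
  rw [hg, ← full_run]
  refine exists_congr fun k => ?_
  obtain ⟨s', h1, h2⟩ := hP (Encodable.encode c) k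
  rw [main_path h1, h2]

/-! ### Part 3: counting characterisation of runs, and data values -/

def isK (a : ℕ → Tr) (k r i : ℕ) : Prop := (a i).kind = k ∧ (a i).reg = r

instance (a : ℕ → Tr) (k r : ℕ) : DecidablePred (isK a k r) :=
  fun i => inferInstanceAs (Decidable ((a i).kind = k ∧ (a i).reg = r))

/-- Counting conditions. -/
def Cnt (N : ℕ) (a : ℕ → Tr) : Prop := ∀ p < N,
  ((a p).kind = 1 → Nat.count (isK a 1 (a p).reg) p < Nat.count (isK a 0 (a p).reg) p) ∧
  ((a p).kind = 2 → Nat.count (isK a 0 (a p).reg) p ≤ Nat.count (isK a 1 (a p).reg) p)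

theorem cnt_of_eff {N : ℕ} {a : ℕ → Tr} {st : ℕ → St} (h0 : st 0 = fun _ => 0)
    (h : ∀ p < N, Eff (a p) (st p) (st (p+1))) : Cnt N a := by
  have key : ∀ p ≤ N, ∀ r, st p r + Nat.count (isK a 1 r) p = Nat.count (isK a 0 r) p := by
    intro p
    induction p with
    | zero => intro _ r; simp [h0]
    | succ p ih =>
      intro hp r
      have h1 := ih (by omega) r
      have h2 := h p (by omega)
      simp only [Nat.count_succ, isK]
      simp only [Eff] at h2
      split_ifs at h2 with k0 k1 k2
      · rw [h2]; simp only [Function.update_apply]; grind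
      · rw [h2.2]; simp only [Function.update_apply]; grind
      · rw [h2.2]; grind
      · rw [h2]; grind
  intro p hp
  have h1 := key p (by omega) (a p).reg
  have h2 := h p hp
  simp only [Eff] at h2
  constructor
  · intro k; simp [k] at h2; omega
  · intro k; simp [k] at h2; omega

theorem eff_of_cnt {N : ℕ} {a : ℕ → Tr} (h : Cnt N a) : ∀ p < N, Eff (a p)
    (fun r => Nat.count (isK a 0 r) p - Nat.count (isK a 1 r) p)
    (fun r => Nat.count (isK a 0 r) (p+1) - Nat.count (isK a 1 r) (p+1)) := by
  have le : ∀ p ≤ N, ∀ r, Nat.count (isK a 1 r) p ≤ Nat.count (isK a 0 r) p := by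
    intro p
    induction p with
    | zero => simp
    | succ p ih =>
      intro hp r
      have h1 := ih (by omega) r
      have h2 := (h p (by omega)).1
      rw [Nat.count_succ, Nat.count_succ]
      by_cases hk : isK a 1 r p
      · have := h2 hk.1
        rw [hk.2] at this
        simp only [hk, if_true]
        omega
      · simp only [hk, if_false]
        omega
  intro p hp
  have h1 := le p (by omega)
  obtain ⟨h2, h3⟩ := h p hp
  simp only [Eff, Nat.count_succ]
  split_ifs with k0 k1 k2
  · funext r
    have := h1 r
    simp only [Function.update_apply, isK]
    grind
  · refine ⟨by have := h2 k1; omega, ?_⟩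
    funext r
    have := h1 r
    simp only [Function.update_apply, isK]
    grind
  · refine ⟨by have := h3 k2; omega, ?_⟩
    funext r
    simp [isK, k2]
  · funext r
    simp [isK, k0, k1]

/-- Conditions on the data values that the formula expresses. -/
def NLoc (N : ℕ) (a : ℕ → Tr) (D : ℕ → ℕ) (i : ℕ) : Prop :=
  ((a i).kind = 0 → (∀ j < i, D j ≠ D i) ∧
    ((∃ j < N, i ≤ j ∧ D j = D i ∧ isK a 1 (a i).reg j ∧
      ∀ k, i ≤ k → k < j → ¬ isK a 2 (a i).reg k) ∨
      ∀ j < N, i ≤ j → ¬ isK a 2 (a i).reg j)) ∧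
  ((a i).kind = 1 → ∃ j < i, D j = D i ∧ (∀ k < i, D k = D i → k ≤ j) ∧ isK a 0 (a i).reg j)

theorem cnt_of_nloc {N a D} (h : ∀ i < N, NLoc N a D i) : Cnt N a := by
  intro p hp
  constructor
  · intro hk
    have h1 : ∀ q, q < N ∧ isK a 1 (a p).reg q →
        ∃ j < q, D j = D q ∧ (∀ k < q, D k = D q → k ≤ j) ∧ isK a 0 (a p).reg j := by
      rintro q ⟨hq, k1, k2⟩
      have := (h q hq).2 k1
      rwa [k2] at this
    choose! f hf using h1
    have : Nat.count (isK a 1 (a p).reg) (p+1) ≤ Nat.count (isK a 0 (a p).reg) p := by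
      rw [Nat.count_eq_card_filter_range, Nat.count_eq_card_filter_range]
      apply Finset.card_le_card_of_injOn f
      · intro q hq
        simp only [Finset.coe_filter, Finset.mem_range, Set.mem_ofPred_eq] at hq ⊢
        have := hf q ⟨by omega, hq.2⟩
        exact ⟨by omega, this.2.2.2⟩
      · intro q hq q' hq' e
        simp only [Finset.coe_filter, Finset.mem_range, Set.mem_ofPred_eq] at hq hq'
        have g := hf q ⟨by omega, hq.2⟩
        have g' := hf q' ⟨by omega, hq'.2⟩
        rcases lt_trichotomy q q' with hl | hl | hl
        · have := g'.2.2.1 q hl (by rw [← g'.2.1, ← g.2.1, e])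
          omega
        · exact hl
        · have := g.2.2.1 q' hl (by rw [← g'.2.1, ← g.2.1, e])
          omega
    rw [Nat.count_succ, if_pos ⟨hk, rfl⟩] at this
    omega
  · intro hk
    have h1 : ∀ q, q < p ∧ isK a 0 (a p).reg q → (∀ j < q, D j ≠ D q) ∧
        ∃ j < p, D j = D q ∧ isK a 1 (a p).reg j := by
      rintro q ⟨hq, k1, k2⟩
      obtain ⟨g1, g2⟩ := (h q (by omega)).1 k1
      refine ⟨g1, ?_⟩
      rw [k2] at g2
      rcases g2 with ⟨j, hj, hqj, e, hk1, hz⟩ | g2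
      · refine ⟨j, ?_, e, hk1⟩
        by_contra hcon
        rcases Nat.lt_or_ge p j with hl | hl
        · exact hz p (by omega) hl ⟨hk, rfl⟩
        · have : j = p := by omega
          subst this
          have := hk1.1
          omega
      · exact absurd ⟨hk, rfl⟩ (g2 p hp (by omega))
    have h2 : ∀ q, q < p ∧ isK a 0 (a p).reg q → ∃ j < p, D j = D q ∧ isK a 1 (a p).reg j :=
      fun q hq => (h1 q hq).2
    choose! f hf using h2
    rw [Nat.count_eq_card_filter_range, Nat.count_eq_card_filter_range]
    apply Finset.card_le_card_of_injOn f
    · intro q hq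
      simp only [Finset.coe_filter, Finset.mem_range, Set.mem_ofPred_eq] at hq ⊢
      have := hf q hq
      exact ⟨this.1, this.2.2⟩
    · intro q hq q' hq' e
      simp only [Finset.coe_filter, Finset.mem_range, Set.mem_ofPred_eq] at hq hq'
      have g := hf q hq
      have g' := hf q' hq'
      have hd : D q = D q' := by rw [← g.2.1, ← g'.2.1, e]
      rcases lt_trichotomy q q' with hl | hl | hl
      · exact absurd hd ((h1 q' hq').1 q hl)
      · exact hl
      · exact absurd hd.symm ((h1 q hq).1 q' hl)

theorem exists_count {p : ℕ → Prop} [DecidablePred p] {m b : ℕ} (h : m < Nat.count p b) :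
    ∃ i < b, p i ∧ Nat.count p i = m := by
  refine ⟨Nat.nth p m, Nat.nth_lt_of_lt_count h, ?_, ?_⟩
  · exact Nat.nth_mem m fun hf => lt_of_lt_of_le h (Nat.count_le_card hf b)
  · exact Nat.count_nth fun hf => lt_of_lt_of_le h (Nat.count_le_card hf b)

theorem count_inj' {p : ℕ → Prop} [DecidablePred p] {i j : ℕ} (hi : p i) (hj : p j)
    (h : Nat.count p i = Nat.count p j) : i = j := Nat.count_injective hi hj h

def dataOf (a : ℕ → Tr) (p : ℕ) : ℕ :=
  if (a p).kind = 0 then 2 * Nat.pair (a p).reg (Nat.count (isK a 0 (a p).reg) p)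
  else if (a p).kind = 1 then 2 * Nat.pair (a p).reg (Nat.count (isK a 1 (a p).reg) p)
  else 2 * p + 1

theorem dataOf_eq {a : ℕ → Tr} {i k : ℕ} (hi : (a i).kind = 0 ∨ (a i).kind = 1)
    (h : dataOf a k = dataOf a i) : (a k).reg = (a i).reg ∧
    ((a k).kind = 0 ∨ (a k).kind = 1) ∧
    Nat.count (isK a (a k).kind (a i).reg) k = Nat.count (isK a (a i).kind (a i).reg) i := by
  unfold dataOf at h
  have aux : ∀ x y z w : ℕ, 2 * Nat.pair x y = 2 * Nat.pair z w → x = z ∧ y = w := by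
    intro x y z w hh
    exact Nat.pair_eq_pair.1 (by omega)
  by_cases k0 : (a k).kind = 0
  · rcases hi with hi | hi
    · simp only [k0, hi, if_true] at h
      obtain ⟨e1, e2⟩ := aux _ _ _ _ h
      refine ⟨e1, Or.inl k0, ?_⟩
      rw [k0, hi, ← e2, e1]
    · simp only [k0, hi, if_true, one_ne_zero, if_false] at h
      obtain ⟨e1, e2⟩ := aux _ _ _ _ h
      refine ⟨e1, Or.inl k0, ?_⟩
      rw [k0, hi, ← e2, e1]
  · by_cases k1 : (a k).kind = 1
    · rcases hi with hi | hi
      · simp only [k1, hi, if_true, one_ne_zero, if_false] at h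
        obtain ⟨e1, e2⟩ := aux _ _ _ _ h
        refine ⟨e1, Or.inr k1, ?_⟩
        rw [k1, hi, ← e2, e1]
      · simp only [k1, hi, if_true, one_ne_zero, if_false] at h
        obtain ⟨e1, e2⟩ := aux _ _ _ _ h
        refine ⟨e1, Or.inr k1, ?_⟩
        rw [k1, hi, ← e2, e1]
    · rw [if_neg k0, if_neg k1] at h
      rcases hi with hi | hi <;> simp [hi] at h <;> omega

theorem nloc_of_cnt {N a} (h : Cnt N a) : ∀ i < N, NLoc N a (dataOf a) i := by
  intro i hi
  constructor
  · intro hk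
    have h0 : isK a 0 (a i).reg i := ⟨hk, rfl⟩
    constructor
    · intro j hj e
      obtain ⟨e1, e2, e3⟩ := dataOf_eq (Or.inl hk) e
      rw [hk] at e3
      rcases e2 with e2 | e2
      · rw [e2] at e3
        have := count_inj' (p := isK a 0 (a i).reg) ⟨e2, e1⟩ h0 e3
        omega
      · have := (h j (by omega)).1 e2
        rw [e2] at e3
        rw [e1, e3] at this
        have := Nat.count_monotone (isK a 0 (a i).reg) hj.le
        omega
    · by_cases hz : ∀ j < N, i ≤ j → ¬ isK a 2 (a i).reg j
      · exact Or.inr hz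
      · left
        have hex : ∃ j, j < N ∧ i ≤ j ∧ isK a 2 (a i).reg j := by
          push Not at hz
          obtain ⟨j, h1, h2, h3⟩ := hz
          exact ⟨j, h1, h2, h3⟩
        classical
        obtain ⟨z1, z2, z3⟩ := Nat.find_spec hex
        have zmin := fun k (hk : k < Nat.find hex) => Nat.find_min hex hk
        set z := Nat.find hex
        have hiz : i ≠ z := by
          intro e; rw [← e] at z3; have := z3.1; omega
        have c1 := (h z z1).2 z3.1
        rw [z3.2] at c1
        have c2 := Nat.count_monotone (isK a 0 (a i).reg) (show i + 1 ≤ z by omega)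
        rw [Nat.count_succ, if_pos h0] at c2
        obtain ⟨j, hj, hj1, hj2⟩ := exists_count (p := isK a 1 (a i).reg)
          (m := Nat.count (isK a 0 (a i).reg) i) (b := z) (by omega)
        have hij : i ≤ j := by
          by_contra hcon
          have d1 := (h j (by omega)).1 hj1.1
          rw [hj1.2, hj2] at d1
          have := Nat.count_monotone (isK a 0 (a i).reg) (show j ≤ i by omega)
          omega
        refine ⟨j, by omega, hij, ?_, hj1, ?_⟩
        · unfold dataOf
          rw [if_pos hk, if_neg (by rw [hj1.1]; omega), if_pos hj1.1, hj1.2, hj2]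
        · intro k hk1 hk2 hk3
          exact zmin k (by omega) ⟨by omega, hk1, hk3⟩
  · intro hk
    have h1 : isK a 1 (a i).reg i := ⟨hk, rfl⟩
    obtain ⟨j, hj, hj1, hj2⟩ := exists_count ((h i hi).1 hk)
    refine ⟨j, hj, ?_, ?_, hj1⟩
    · unfold dataOf
      rw [if_pos hj1.1, if_neg (by rw [hk]; omega), if_pos hk, hj1.2, hj2]
    · intro k hki e
      obtain ⟨e1, e2, e3⟩ := dataOf_eq (Or.inr hk) e
      rw [hk] at e3
      rcases e2 with e2 | e2
      · rw [e2] at e3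
        have := count_inj' (p := isK a 0 (a i).reg) ⟨e2, e1⟩ hj1 (e3.trans hj2.symm)
        omega
      · rw [e2] at e3
        have := count_inj' (p := isK a 1 (a i).reg) ⟨e2, e1⟩ h1 e3
        omega

/-! ### Part 4: the formula -/

def Tr.code (t : Tr) : ℕ := Nat.pair t.src (Nat.pair t.kind (Nat.pair t.reg t.dst))

theorem Tr.code_inj {t u : Tr} (h : t.code = u.code) : t = u := by
  cases t; cases u
  simpa [Tr.code, Nat.pair_eq_pair] using h

def topL : LFormula := .or (.atom 0) (.neg (.atom 0))

def orsL : List ℕ → LFormula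
  | [] => .neg topL
  | a :: l => .or (.atom a) (orsL l)

def botP : PosFormula := .neg (.or (.atom 0) (.neg (.atom 0)))

def orsP : List ℕ → PosFormula
  | [] => botP
  | a :: l => .or (.atom a) (orsP l)

def andL (φ ψ : LFormula) : LFormula := .neg (.or (.neg φ) (.neg ψ))

def andsL : List LFormula → LFormula
  | [] => topL
  | a :: l => andL a (andsL l)

def alwaysL (φ : LFormula) : LFormula := .neg (.U topL (.neg φ))

section Sem

variable {w : Word}

theorem sat_top (i : Fin w.n) : satL w i topL := by
  simp only [topL, satL]; exact em _

theorem sat_and (i : Fin w.n) (φ ψ : LFormula) :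
    satL w i (andL φ ψ) ↔ satL w i φ ∧ satL w i ψ := by
  simp only [andL, satL]; tauto

theorem sat_ands (i : Fin w.n) (l : List LFormula) :
    satL w i (andsL l) ↔ ∀ φ ∈ l, satL w i φ := by
  induction l with
  | nil => simp [andsL, sat_top]
  | cons a l ih => simp [andsL, sat_and, ih]

theorem sat_ors (i : Fin w.n) (l : List ℕ) :
    satL w i (orsL l) ↔ ∃ p ∈ l, p ∈ w.lab i := by
  induction l with
  | nil => simp [orsL, satL, sat_top]
  | cons a l ih => simp [orsL, satL, ih]

theorem sat_orsP (i : Fin w.n) (l : List ℕ) :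
    satP w i (orsP l) ↔ ∃ p ∈ l, p ∈ w.lab i := by
  induction l with
  | nil => simp only [orsP, botP, satP]; simp [em]
  | cons a l ih => simp [orsP, satP, ih]

theorem sat_G (i : Fin w.n) (φ : LFormula) :
    satL w i (alwaysL φ) ↔ ∀ j, i ≤ j → satL w j φ := by
  simp only [alwaysL, satL, sat_top]
  simp

/-- codes of the transitions of `T` that satisfy `q` -/
def codes (T : List Tr) (q : Tr → Bool) : List ℕ := (T.filter q).map Tr.code

def kb (k r : ℕ) (t : Tr) : Bool := decide (t.kind = k ∧ t.reg = r)

def nextF (T : List Tr) (F : ℕ) (t : Tr) : LFormula :=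
  .or (.X (orsL (codes T fun u => decide (u.src = t.dst))))
    (if t.dst = F then .neg (.X topL) else .neg topL)

def cntF (T : List Tr) (t : Tr) : LFormula :=
  if t.kind = 0 then
    andL (.neg (.Yeq topL))
      (.or (.uat (.neg (orsP (codes T (kb 2 t.reg)))) (orsP (codes T (kb 1 t.reg))))
        (.neg (.U topL (orsL (codes T (kb 2 t.reg))))))
  else if t.kind = 1 then .Yeq (orsL (codes T (kb 0 t.reg)))
  else topL

def trF (T : List Tr) (F : ℕ) (t : Tr) : LFormula :=
  .or (.neg (.atom t.code)) (andL (nextF T F t) (cntF T t))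

def exclF (t u : Tr) : LFormula :=
  if t = u then topL else .or (.neg (.atom t.code)) (.neg (.atom u.code))

def locF (T : List Tr) (F : ℕ) : LFormula :=
  andL (orsL (codes T fun _ => true))
    (andL (andsL (T.map fun t => andsL (T.map fun u => exclF t u)))
      (andsL (T.map fun t => trF T F t)))

def bigF (T : List Tr) (F : ℕ) : LFormula :=
  andL (orsL (codes T fun u => decide (u.src = 0))) (alwaysL (locF T F))

def psi (t0 : Tr) : ℕ → LFormula
  | 0 => .neg (.atom t0.code)
  | n+1 => andL (.atom t0.code) (.X (psi t0 n))

/-- The labels of `w` describe the sequence `a` of transitions of `T`. -/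
def Lab (w : Word) (T : List Tr) (a : ℕ → Tr) : Prop :=
  ∀ i : Fin w.n, a i ∈ T ∧ ∀ t ∈ T, t.code ∈ w.lab i ↔ t = a i

theorem mem_codes {T a} (h : Lab w T a) (i : Fin w.n) (q : Tr → Bool) :
    (∃ p ∈ codes T q, p ∈ w.lab i) ↔ q (a i) = true := by
  obtain ⟨h1, h2⟩ := h i
  simp only [codes, List.mem_map, List.mem_filter]
  constructor
  · rintro ⟨p, ⟨t, ⟨ht, hq⟩, rfl⟩, hp⟩
    rw [← (h2 t ht).1 hp]; exact hq
  · intro hq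
    exact ⟨_, ⟨a i, ⟨h1, hq⟩, rfl⟩, (h2 _ h1).2 rfl⟩

theorem sat_next {T a} (F : ℕ) (h : Lab w T a) (i : Fin w.n) :
    satL w i (nextF T F (a i)) ↔
      ((i : ℕ) + 1 < w.n ∧ (a (i+1)).src = (a i).dst) ∨ ((i : ℕ) + 1 = w.n ∧ (a i).dst = F) := by
  have hi := i.isLt
  simp only [nextF, satL, sat_ors, mem_codes h, decide_eq_true_eq]
  split_ifs with hF
  · simp only [satL, sat_top, exists_prop, and_true]
    constructor
    · rintro (h | h)
      · exact Or.inl h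
      · exact Or.inr ⟨by omega, hF⟩
    · rintro (h | h)
      · exact Or.inl h
      · exact Or.inr (by omega)
  · simp only [satL, sat_top, exists_prop]
    simp [hF]

theorem sat_cnt {T a} {D : ℕ → ℕ} (h : Lab w T a) (hD : ∀ i : Fin w.n, w.d i = D i)
    (i : Fin w.n) : satL w i (cntF T (a i)) ↔ NLoc w.n a D i := by
  have hi := i.isLt
  unfold cntF NLoc
  split_ifs with k0 k1
  · rw [sat_and]
    simp only [satL, sat_top, satP, sat_ors, sat_orsP, mem_codes h, kb, decide_eq_true_eq, hD,
      k0, isK]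
    simp only [zero_ne_one, false_imp_iff, and_true, true_imp_iff]
    refine and_congr ?_ (or_congr ?_ ?_)
    · constructor
      · intro hh j hj e
        -- the greatest earlier position of the class
        classical
        let S := (Finset.univ : Finset (Fin w.n)).filter (fun x => x < i ∧ D x = D i)
        have hS : S.Nonempty := ⟨⟨j, by omega⟩, Finset.mem_filter.2 ⟨Finset.mem_univ _, hj, e⟩⟩
        have hm := S.max'_mem hS
        simp only [S, Finset.mem_filter, Finset.mem_univ, true_and] at hm
        refine hh ⟨S.max' hS, hm.1, hm.2, ?_⟩
        intro k hk1 hk2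
        exact S.le_max' k (by simp [S, hk1, hk2])
      · rintro hh ⟨j, hj, e, _⟩
        exact hh j hj e
    · constructor
      · rintro ⟨j, h1, h2, h3, h4⟩
        exact ⟨j, j.isLt, h1, h2, h3, fun k hk1 hk2 => h4 ⟨k, by omega⟩ hk1 hk2⟩
      · rintro ⟨j, hj, h1, h2, h3, h4⟩
        exact ⟨⟨j, hj⟩, h1, h2, h3, fun k hk1 hk2 => h4 k hk1 hk2⟩
    · constructor
      · intro hh j hj hij hk
        exact hh ⟨⟨j, hj⟩, hij, hk, fun _ _ _ => trivial⟩
      · rintro hh ⟨j, hij, hk, _⟩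
        exact hh j j.isLt hij hk
  · simp only [satL, sat_ors, mem_codes h, kb, decide_eq_true_eq, hD, k1, isK]
    simp only [one_ne_zero, false_imp_iff, true_and, true_imp_iff]
    constructor
    · rintro ⟨j, h1, h2, h3, h4⟩
      exact ⟨j, h1, h2, fun k hk e => h3 ⟨k, by omega⟩ hk e, h4⟩
    · rintro ⟨j, h1, h2, h3, h4⟩
      exact ⟨⟨j, by omega⟩, h1, h2, fun k hk e => h3 k hk e, h4⟩
  · simp [sat_top, k0, k1]

theorem sat_psi {T a t0} (h : Lab w T a) (h0 : t0 ∈ T) : ∀ (n : ℕ) (i : Fin w.n),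
    satL w i (psi t0 n) ↔ (∀ j < n, a (i + j) = t0) ∧ (i : ℕ) + n < w.n ∧ a (i + n) ≠ t0 := by
  intro n
  induction n with
  | zero =>
    intro i
    have := (h i).2 t0 h0
    simp only [psi, satL, this, add_zero]
    constructor
    · intro e; exact ⟨by simp, i.isLt, fun e' => e e'.symm⟩
    · rintro ⟨_, _, e⟩ e'; exact e e'.symm
  | succ n ih =>
    intro i
    have := (h i).2 t0 h0
    simp only [psi, sat_and, satL, this, ih]
    constructor
    · rintro ⟨e, h1, h2, h3, h4⟩
      refine ⟨?_, by omega, ?_⟩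
      · intro j hj
        cases j with
        | zero => exact e.symm
        | succ j => rw [← h2 j (by omega)]; congr 1; omega
      · rwa [show (i : ℕ) + (n + 1) = i + 1 + n by omega]
    · rintro ⟨h1, h2, h3⟩
      refine ⟨(h1 0 (by omega)).symm, by omega, ?_, by omega, ?_⟩
      · intro j hj
        rw [← h1 (j+1) (by omega)]; congr 1; omega
      · rwa [show (i : ℕ) + 1 + n = i + (n + 1) by omega]

theorem sat_loc {T a} {D : ℕ → ℕ} (F : ℕ) (h : Lab w T a) (hD : ∀ i : Fin w.n, w.d i = D i)
    (i : Fin w.n) : satL w i (locF T F) ↔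
      (((i : ℕ) + 1 < w.n ∧ (a (i+1)).src = (a i).dst) ∨ ((i : ℕ) + 1 = w.n ∧ (a i).dst = F)) ∧
      NLoc w.n a D i := by
  obtain ⟨h1, h2⟩ := h i
  simp only [locF, sat_and, sat_ors, sat_ands, List.mem_map, forall_exists_index, and_imp,
    forall_apply_eq_imp_iff₂, mem_codes h, true_and]
  rw [← sat_next F h i, ← sat_cnt h hD i]
  constructor
  · rintro ⟨_, h3⟩
    have := h3 _ h1
    simp only [trF, satL, sat_and, (h2 _ h1), not_true, false_or] at this
    exact this
  · intro h3
    constructor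
    · intro t ht u hu
      unfold exclF
      split_ifs with e
      · exact sat_top i
      · simp only [satL, h2 t ht, h2 u hu]
        by_contra hcon
        push Not at hcon
        exact e (hcon.1.trans hcon.2.symm)
    · intro t ht
      simp only [trF, satL, sat_and, h2 t ht]
      by_cases e : t = a i
      · right; rw [e]; exact h3
      · left; exact e

theorem lab_of_sat {T F} (hs : ∀ i : Fin w.n, satL w i (locF T F)) : ∃ a, Lab w T a := by
  have : ∀ i : Fin w.n, ∃ u, u ∈ T ∧ ∀ t ∈ T, t.code ∈ w.lab i ↔ t = u := by
    intro i
    have h := hs i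
    simp only [locF, sat_and, sat_ors, sat_ands, List.mem_map, forall_exists_index, and_imp,
      forall_apply_eq_imp_iff₂] at h
    obtain ⟨h1, h2, -⟩ := h
    simp only [codes, List.mem_map, List.mem_filter] at h1
    obtain ⟨p, ⟨u, ⟨hu, -⟩, rfl⟩, hp⟩ := h1
    refine ⟨u, hu, fun t ht => ⟨fun hl => ?_, fun e => e ▸ hp⟩⟩
    have := h2 t ht u hu
    by_contra e
    rw [exclF, if_neg e] at this
    simp only [satL] at this
    tauto
  choose f hf using this
  refine ⟨fun i => if h : i < w.n then f ⟨i, h⟩ else ⟨0,0,0,0⟩, fun i => ?_⟩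
  simpa using hf i

end Sem

theorem satisfiable_iff {T : List Tr} {F : ℕ} {t0 : Tr} (h0 : t0 ∈ T) (n : ℕ) :
    Satisfiable (andL (bigF T F) (psi t0 n)) ↔
    ∃ N a cfg, Run T F (0, fun _ => 0) N a cfg ∧ (∀ i < n, a i = t0) ∧ n < N ∧ a n ≠ t0 := by
  constructor
  · rintro ⟨w, hw⟩
    simp only [bigF, sat_and, sat_G] at hw
    obtain ⟨⟨hi, hg⟩, hp⟩ := hw
    have hg' : ∀ i : Fin w.n, satL w i (locF T F) := fun i => hg i (Nat.zero_le _)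
    obtain ⟨a, ha⟩ := lab_of_sat hg'
    let D : ℕ → ℕ := fun i => if h : i < w.n then w.d ⟨i, h⟩ else 0
    have hD : ∀ i : Fin w.n, w.d i = D i := by intro i; simp [D]
    rw [sat_psi ha h0] at hp
    simp only [zero_add] at hp
    rw [sat_ors, mem_codes ha, decide_eq_true_eq] at hi
    have hl := fun i => (sat_loc F ha hD i).1 (hg' i)
    have hc : Cnt w.n a := cnt_of_nloc fun i hi => (hl ⟨i, hi⟩).2
    have he := eff_of_cnt hc
    have np := w.npos
    refine ⟨w.n, a, fun p => (if p < w.n then (a p).src else F,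
      fun r => Nat.count (isK a 0 r) p - Nat.count (isK a 1 r) p), ⟨?_, ?_, ?_⟩, hp⟩
    · simp only [np, if_true, Nat.count_zero, Nat.sub_self]
      rw [show (a 0).src = 0 from hi]
    · simp
    · intro p hp
      refine ⟨(ha ⟨p, hp⟩).1, ?_, ?_, he p hp⟩
      · simp [hp]
      · rcases (hl ⟨p, hp⟩).1 with ⟨h1, h2⟩ | ⟨h1, h2⟩
        · simp only at h1 h2
          simp [h1, h2]
        · simp only at h1 h2
          simp [h1, h2]
  · rintro ⟨N, a, cfg, ⟨c0, cN, hs⟩, h1, h2, h3⟩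
    have hc : Cnt N a := cnt_of_eff (st := fun p => (cfg p).2) (by simp [c0])
      (fun p hp => (hs p hp).2.2.2)
    have hn := nloc_of_cnt hc
    let w : Word := ⟨N, by omega, fun i => {(a i).code}, fun i => dataOf a i⟩
    have ha : Lab w T a := by
      intro i
      refine ⟨(hs i i.isLt).1, fun t ht => ?_⟩
      change t.code ∈ ({(a i).code} : Set ℕ) ↔ _
      rw [Set.mem_singleton_iff]
      exact ⟨Tr.code_inj, fun e => by rw [e]⟩
    have hD : ∀ i : Fin w.n, w.d i = dataOf a i := fun i => rfl
    refine ⟨w, ?_⟩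
    simp only [bigF, sat_and, sat_G]
    refine ⟨⟨?_, ?_⟩, ?_⟩
    · rw [sat_ors, mem_codes ha, decide_eq_true_eq]
      have := (hs 0 (by omega)).2.1
      rw [c0] at this
      exact this
    · intro i _
      rw [sat_loc F ha hD]
      have hi : (i : ℕ) < N := i.isLt
      refine ⟨?_, hn i hi⟩
      have e := (hs i hi).2.2.1
      rcases Nat.lt_or_ge ((i : ℕ) + 1) N with hl | hl
      · left
        exact ⟨hl, by rw [e]; exact (hs _ hl).2.1⟩
      · right
        have : (i : ℕ) + 1 = N := by omega
        refine ⟨this, ?_⟩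
        rw [e, this, cN]
    · rw [sat_psi ha h0]
      simp only [zero_add]
      exact ⟨h1, h2, h3⟩

def encAnd (x y : ℕ) : ℕ :=
  Nat.pair 1 (Nat.pair 2 (Nat.pair (Nat.pair 1 x) (Nat.pair 1 y)))

theorem encode_and (φ ψ : LFormula) : encodeL (andL φ ψ) = encAnd (encodeL φ) (encodeL ψ) := rfl

theorem primrec_encAnd : Primrec₂ encAnd := by
  have hp : ∀ {f g : ℕ × ℕ → ℕ}, Primrec f → Primrec g →
      Primrec fun x => Nat.pair (f x) (g x) := fun hf hg => Primrec₂.natPair.comp hf hg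
  exact hp (Primrec.const 1) (hp (Primrec.const 2)
    (hp (hp (Primrec.const 1) Primrec.fst) (hp (Primrec.const 1) Primrec.snd)))

theorem primrec_psi (t0 : Tr) : Primrec fun n => encodeL (psi t0 n) := by
  have h : Primrec fun n : ℕ => Nat.rec (motive := fun _ => ℕ) (encodeL (psi t0 0))
      (fun _ IH => encAnd (encodeL (.atom t0.code)) (Nat.pair 3 IH)) n := by
    refine Primrec.nat_rec₁ _ ?_
    exact primrec_encAnd.comp (Primrec.const _)
      (Primrec₂.natPair.comp (Primrec.const 3) Primrec.snd)
  refine h.of_eq fun n => ?_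
  induction n with
  | zero => rfl
  | succ n ih => simp only [ih]; rfl

/-- Satisfiability of `L`-formulas over finite 1-attributed words is
undecidable: no computable function (on Gödel codes) decides it. -/
theorem undecidable_satisfiability_finite :
    ¬ ∃ f : ℕ → Bool, Computable f ∧
      ∀ φ : LFormula, (f (encodeL φ) = true ↔ Satisfiable φ) := by
  rintro ⟨f, hf, hφ⟩
  obtain ⟨T, F, t0, h0, hT⟩ := exists_machine
  apply ComputablePred.halting_problem 0
  rw [ComputablePred.computable_iff]
  refine ⟨fun c => f (encodeL (andL (bigF T F) (psi t0 (Encodable.encode c)))), ?_, ?_⟩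
  · refine hf.comp ?_
    exact (primrec_encAnd.comp (Primrec.const (encodeL (bigF T F)))
      ((primrec_psi t0).comp Primrec.encode)).to_comp
  · funext c
    rw [hφ, satisfiable_iff h0, hT c]

end Stmt0
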